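/- Let M₀ = [[A,B],[B*,D]] be a top-dominant block operator matrix satisfying conditions (i)–(iii), with Schur complement S(μ), d = max Spec(D), and let λ_m ∈ (d, λ_e) be an eigenvalue of the closure M. Let b > 0 be such that (0, b] ∩ Spec(S(λ_m)) = ∅, and let (μ_n) be real numbers with 0 ≤ μ_n − λ_m = ε_n → 0. Then for all sufficiently large n: (0, b] ∩ Spec(S(μ_n)) = ∅, and ‖(S(λ_m) − b)^{-1} − (S(μ_n) − b)^{-1}‖ = O(ε_n). -/

import Mathlib

open Filter Topology
open scoped ComplexInnerProductSpace

/-- A (possibly unbounded, densely defined) linear operator from `E` to `F`,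
encoded by its domain together with a total function that is linear on the domain. -/
structure PMap (E F : Type*) [NormedAddCommGroup E] [InnerProductSpace ℂ E]
    [NormedAddCommGroup F] [InnerProductSpace ℂ F] : Type _ where
  dom : Submodule ℂ E
  toFun : E → F
  map_add' : ∀ x ∈ dom, ∀ y ∈ dom, toFun (x + y) = toFun x + toFun y
  map_smul' : ∀ (c : ℂ), ∀ x ∈ dom, toFun (c • x) = c • toFun x

namespace PMap

variable {E F : Type*} [NormedAddCommGroup E] [InnerProductSpace ℂ E]
  [NormedAddCommGroup F] [InnerProductSpace ℂ F]

/-- `T` is self-adjoint : it is densely defined and the adjoint relation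
`⟪T x, y⟫ = ⟪x, z⟫` (for all `x` in the domain) holds iff `y` is in the domain
and `z = T y`. -/
def IsSelfAdjoint (T : PMap E E) : Prop :=
  Dense (T.dom : Set E) ∧
    ∀ y z : E, (∀ x ∈ T.dom, ⟪T.toFun x, y⟫ = ⟪x, z⟫) ↔ y ∈ T.dom ∧ z = T.toFun y

/-- The resolvent set : points `z` where `T - z` has an everywhere defined bounded inverse. -/
def resolventSet (T : PMap E E) : Set ℂ :=
  {z | ∃ R : E →L[ℂ] E, (∀ x ∈ T.dom, R (T.toFun x - z • x) = x) ∧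
      ∀ y : E, R y ∈ T.dom ∧ T.toFun (R y) - z • R y = y}

/-- The spectrum of `T`. -/
def spec (T : PMap E E) : Set ℂ := {z | z ∉ T.resolventSet}

/-- The real points of the spectrum of `T`. -/
def specR (T : PMap E E) : Set ℝ := {t : ℝ | (t : ℂ) ∈ T.spec}

/-- The (real) essential spectrum of `T`, via singular Weyl sequences. -/
def specEssR (T : PMap E E) : Set ℝ :=
  {t : ℝ | ∃ f : ℕ → E, (∀ n, f n ∈ T.dom) ∧ (∀ n, ‖f n‖ = 1) ∧
      (∀ y : E, Tendsto (fun n => ⟪y, f n⟫) atTop (𝓝 0)) ∧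
      Tendsto (fun n => ‖T.toFun (f n) - (t : ℂ) • f n‖) atTop (𝓝 0)}

/-- The eigenspace `ker (T - t)`. -/
def eigSp (T : PMap E E) (t : ℝ) : Submodule ℂ E where
  carrier := {x | x ∈ T.dom ∧ T.toFun x = (t : ℂ) • x}
  add_mem' := by
    rintro a b ⟨ha1, ha2⟩ ⟨hb1, hb2⟩
    exact ⟨T.dom.add_mem ha1 hb1, by rw [T.map_add' a ha1 b hb1, ha2, hb2, smul_add]⟩
  zero_mem' := by
    refine ⟨T.dom.zero_mem, ?_⟩
    have h := T.map_smul' 0 0 T.dom.zero_mem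
    simpa using h
  smul_mem' := by
    rintro c x ⟨hx1, hx2⟩
    refine ⟨T.dom.smul_mem c hx1, ?_⟩
    rw [T.map_smul' c x hx1, hx2]
    exact smul_comm c ((t : ℂ)) x

/-- The distance from `u` to the set `L` in the graph norm of `T`. -/
noncomputable def gdist (T : PMap E E) (u : E) (L : Set E) : ℝ :=
  sInf {r | ∃ v ∈ L, r = Real.sqrt (‖u - v‖ ^ 2 + ‖T.toFun u - T.toFun v‖ ^ 2)}

end PMap

/-- The Schur form `s(μ)[x,y] = 𝔞[x,y] − μ⟨x,y⟩ − ⟨(D−μ)⁻¹ B*x, B*y⟩`, where `fa` is the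
closed form of `A`, `Bs = B*`, and `RD μ = (D−μ)⁻¹` is the resolvent of `D`. -/
noncomputable def schurForm {H1 H2 : Type*} [NormedAddCommGroup H1] [InnerProductSpace ℂ H1]
    [NormedAddCommGroup H2] [InnerProductSpace ℂ H2]
    (fa : H1 → H1 → ℂ) (Bs : PMap H1 H2) (RD : ℂ → (H2 →L[ℂ] H2)) (μ : ℂ) (x y : H1) : ℂ :=
  fa x y - μ * ⟪x, y⟫ - ⟪RD μ (Bs.toFun x), Bs.toFun y⟫

/-- `R` is the (everywhere defined, bounded) resolvent `(T − b)⁻¹` of `T` at `b`. -/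
def IsResolventAt {H1 : Type*} [NormedAddCommGroup H1] [InnerProductSpace ℂ H1]
    (T : PMap H1 H1) (b : ℝ) (R : H1 →L[ℂ] H1) : Prop :=
  (∀ x ∈ T.dom, R (T.toFun x - (b : ℂ) • x) = x) ∧
    ∀ y : H1, R y ∈ T.dom ∧ T.toFun (R y) - (b : ℂ) • R y = y

/-!
Write `W = (A - ν)^(-1/2)` and `V = B* W`, which is bounded by the form bound on `B*`. Substituting
`x = W ξ` turns the form of `S(μ) - t` into that of the bounded operator `T(μ) - t W²`, where
`T(μ) = 1 - V* (D - μ)⁻¹ V + (ν - μ) W²`, so that `(S(μ) - t)⁻¹ = W (T(μ) - t W²)⁻¹ W`.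

For `b` in the resolvent set, the interval `(a, b]` misses the spectrum of `S` exactly when
`(S - b)⁻¹ ≥ -(b - a)⁻¹`. As `μ` increases beyond `d`, the operators `(D - μ)⁻¹ ≤ 0` increase, hence
`T(μ)` decreases, and it is Lipschitz in norm on every `[l, ∞)` with `l > d`. Near an invertible
self-adjoint operator a small decrease can only increase the inverse, even though the operator is
indefinite, because the inertia does not change. So the lower bound on the resolvent persists to the
right of `l`, and the resolvents differ by `O(μ - l)`.
-/

open scoped Ring

theorem isUnit_one_sub_mul_comm {R : Type*} [Ring R] (a b : R) :
    IsUnit (1 - a * b) ↔ IsUnit (1 - b * a) := by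
  simpa [spectrum.mem_iff] using
    not_iff_not.2 (spectrum.unit_mem_mul_comm (R := ℤ) (a := a) (b := b) (r := 1))

theorem inverse_sub_inverse_isBigO {R : Type*} [NormedRing R] [HasSummableGeomSeries R] {a : R}
    (ha : IsUnit a) : (fun x => x⁻¹ʳ - a⁻¹ʳ) =O[𝓝 a] (fun x => x - a) := by
  obtain ⟨u, rfl⟩ := ha
  simpa [Function.comp_def] using ((NormedRing.inverse_add_norm_diff_first_order u).comp_tendsto
    (tendsto_sub_nhds_zero_iff.2 (tendsto_id (x := 𝓝 (u : R))))).of_norm_right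

section CStarAlgebra

variable {A : Type*} [CStarAlgebra A] [PartialOrder A] [StarOrderedRing A] {a x : A}

theorem inverse_le_inverse_of_norm_sub_le (ha : IsUnit a) (hx : IsUnit x) (hsa : IsSelfAdjoint a)
    (hxa : x ≤ a) (h : ‖a⁻¹ʳ‖ * ‖a - x‖ ≤ 1) : a⁻¹ʳ ≤ x⁻¹ʳ := by
  have hnonneg : 0 ≤ a - x := sub_nonneg.2 hxa
  set r := CFC.sqrt (a - x)
  have hr : IsSelfAdjoint r := (CFC.sqrt_nonneg _).isSelfAdjoint
  have hrr : r * r = a - x := CFC.sqrt_mul_sqrt_self _ hnonneg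
  have hinv_a : IsSelfAdjoint a⁻¹ʳ := by
    rw [IsSelfAdjoint, ← Ring.inverse_star, hsa.star_eq]
  have hinv_x : IsSelfAdjoint x⁻¹ʳ := by
    have hxsa : IsSelfAdjoint x := by simpa using hsa.sub hnonneg.isSelfAdjoint
    rw [IsSelfAdjoint, ← Ring.inverse_star, hxsa.star_eq]
  have hnorm : ‖r * a⁻¹ʳ * r‖ ≤ 1 :=
    calc ‖r * a⁻¹ʳ * r‖ ≤ ‖r‖ * ‖a⁻¹ʳ‖ * ‖r‖ := norm_mul₃_le
      _ = ‖a⁻¹ʳ‖ * ‖a - x‖ := by rw [← hrr, hr.norm_mul_self]; ring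
      _ ≤ 1 := h
  have hmid : 0 ≤ 1 - r * a⁻¹ʳ * r := by
    refine sub_nonneg.2 ((hinv_a.conjugate_self hr).le_algebraMap_norm_self.trans ?_)
    simpa using algebraMap_mono A hnorm
  have hfactor : x⁻¹ʳ - a⁻¹ʳ =
      x⁻¹ʳ * (r * (1 - r * a⁻¹ʳ * r) * r) * x⁻¹ʳ := by
    have hexpand : r * (1 - r * a⁻¹ʳ * r) * r =
        (r * r) - (r * r) * a⁻¹ʳ * (r * r) := by noncomm_ring
    rw [hexpand, hrr]
    obtain ⟨u, rfl⟩ := ha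
    obtain ⟨v, rfl⟩ := hx
    simp only [Ring.inverse_unit, mul_sub, sub_mul, mul_assoc, Units.mul_inv, Units.inv_mul,
      Units.inv_mul_cancel_left, one_mul, mul_one]
    abel
  rw [← sub_nonneg, hfactor]
  exact hinv_x.conjugate_nonneg (hr.conjugate_nonneg hmid)

theorem eventually_inverse_le_inverse (ha : IsUnit a) (hsa : IsSelfAdjoint a) :
    ∀ᶠ x in 𝓝[≤] a, a⁻¹ʳ ≤ x⁻¹ʳ := by
  have hunit : ∀ᶠ x in 𝓝 a, IsUnit x := Units.isOpen.mem_nhds ha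
  have hnorm : ∀ᶠ x in 𝓝 a, ‖a⁻¹ʳ‖ * ‖a - x‖ < 1 := by
    have hcont : Continuous fun x => ‖a⁻¹ʳ‖ * ‖a - x‖ := by fun_prop
    exact hcont.continuousAt.eventually_lt_const (by simp)
  filter_upwards [self_mem_nhdsWithin, nhdsWithin_le_nhds hunit, nhdsWithin_le_nhds hnorm]
    with x hxa hx hlt using inverse_le_inverse_of_norm_sub_le ha hx hsa hxa hlt.le

end CStarAlgebra

section Resolvent

variable {H : Type*} [NormedAddCommGroup H] [InnerProductSpace ℂ H]
  {T : PMap H H} {s t : ℝ} {R R' : H →L[ℂ] H}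

theorem IsResolventAt.unique (h : IsResolventAt T t R) (h' : IsResolventAt T t R') : R = R' := by
  ext y
  simpa only [(h'.2 y).2] using h.1 (R' y) (h'.2 y).1

theorem IsResolventAt.sub_eq (h : IsResolventAt T s R) (h' : IsResolventAt T t R') :
    R' - R = (t - s) • (R * R') := by
  ext y
  have hshift : T.toFun (R' y) - (s : ℂ) • R' y = y + ((t - s : ℝ) : ℂ) • R' y := by
    rw [sub_eq_iff_eq_add.1 (h'.2 y).2]
    push_cast
    module
  have hR' := h.1 (R' y) (h'.2 y).1
  rw [hshift, map_add, map_smul, Complex.coe_smul] at hR'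
  exact sub_eq_iff_eq_add'.2 hR'.symm

theorem IsResolventAt.commute (h : IsResolventAt T s R) (h' : IsResolventAt T t R') :
    Commute R R' := by
  rcases eq_or_ne t s with rfl | hts
  · exact h.unique h' ▸ Commute.refl _
  · have hmul : (t - s) • (R * R') = (t - s) • (R' * R) := by
      rw [← h.sub_eq h', ← neg_sub R R', h'.sub_eq h, ← neg_smul, neg_sub]
    exact smul_right_injective _ (sub_ne_zero.2 hts) hmul

theorem IsResolventAt.isUnit_one_sub_smul (h : IsResolventAt T s R) (h' : IsResolventAt T t R') :
    IsUnit (1 - (t - s) • R) := by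
  have hR' : R' - R - (t - s) • (R * R') = 0 := sub_eq_zero.2 (h.sub_eq h')
  have hleft : (1 - (t - s) • R) * (1 + (t - s) • R') = 1 := by
    calc (1 - (t - s) • R) * (1 + (t - s) • R')
        = 1 + (t - s) • (R' - R - (t - s) • (R * R')) := by
          simp only [sub_mul, mul_add, one_mul, mul_one, smul_mul_smul_comm, smul_sub]
          module
      _ = 1 := by rw [hR', smul_zero, add_zero]
  have hcomm : Commute (1 - (t - s) • R) (1 + (t - s) • R') :=
    ((Commute.one_left _).sub_left <| .add_right (.one_right _) <|
      ((h.commute h').smul_right _).smul_left _)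
  exact ⟨⟨_, _, hleft, hcomm.eq ▸ hleft⟩, rfl⟩

theorem IsResolventAt.exists_of_isUnit_one_sub_smul (h : IsResolventAt T s R)
    (hu : IsUnit (1 - (t - s) • R)) : ∃ R', IsResolventAt T t R' := by
  obtain ⟨u, hu⟩ := hu
  have hcomm : Commute R ↑u⁻¹ := by
    refine Commute.units_inv_right ?_
    rw [hu]
    exact (Commute.one_right R).sub_right ((Commute.refl R).smul_right _)
  have hu_apply (x : H) : (u : H →L[ℂ] H) x = x - ((t - s : ℝ) : ℂ) • R x := by
    rw [hu, Complex.coe_smul]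
    rfl
  refine ⟨R * ↑u⁻¹, fun x hx => ?_, fun y => ⟨(h.2 _).1, ?_⟩⟩
  · have hRx : R (T.toFun x - (t : ℂ) • x) = (u : H →L[ℂ] H) x := by
      rw [hu_apply, show T.toFun x - (t : ℂ) • x =
        T.toFun x - (s : ℂ) • x - ((t - s : ℝ) : ℂ) • x by push_cast; module,
        map_sub, h.1 x hx, map_smul]
    rw [hcomm.eq, mul_apply_eq_comp, hRx, ← mul_apply_eq_comp,
      Units.inv_mul, one_apply_eq_self]
  · set w := (↑u⁻¹ : H →L[ℂ] H) y
    calc T.toFun (R w) - (t : ℂ) • R w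
        = T.toFun (R w) - (s : ℂ) • R w - ((t - s : ℝ) : ℂ) • R w := by push_cast; module
      _ = (u : H →L[ℂ] H) w := by rw [(h.2 w).2, hu_apply]
      _ = y := by
        rw [← mul_apply_eq_comp, Units.mul_inv, one_apply_eq_self]

theorem IsResolventAt.exists_iff_isUnit_one_sub_smul (h : IsResolventAt T s R) :
    (∃ R', IsResolventAt T t R') ↔ IsUnit (1 - (t - s) • R) :=
  ⟨fun ⟨_, h'⟩ => h.isUnit_one_sub_smul h', h.exists_of_isUnit_one_sub_smul⟩

theorem IsResolventAt.isSelfAdjoint [CompleteSpace H] (h : IsResolventAt T t R)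
    (hT : T.IsSelfAdjoint) : IsSelfAdjoint R := by
  refine ContinuousLinearMap.isSelfAdjoint_iff_isSymmetric.2 fun x y => ?_
  obtain ⟨hx, hTx⟩ := h.2 x
  obtain ⟨hy, hTy⟩ := h.2 y
  have hsymm := (hT.2 (R y) (T.toFun (R y))).2 ⟨hy, rfl⟩ (R x) hx
  calc ⟪R x, y⟫ = ⟪R x, T.toFun (R y) - (t : ℂ) • R y⟫ := by rw [hTy]
    _ = ⟪T.toFun (R x) - (t : ℂ) • R x, R y⟫ := by
      rw [inner_sub_right, inner_sub_left, hsymm, inner_smul_left, inner_smul_right,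
        Complex.conj_ofReal]
    _ = ⟪x, R y⟫ := by rw [hTx]

theorem notMem_specR_iff : t ∉ T.specR ↔ ∃ R, IsResolventAt T t R :=
  not_not

theorem IsResolventAt.mem_specR_iff (h : IsResolventAt T s R) (hts : t ≠ s) :
    t ∈ T.specR ↔ (t - s)⁻¹ ∈ spectrum ℝ R := by
  have hne : (t - s)⁻¹ ≠ 0 := inv_ne_zero (sub_ne_zero.2 hts)
  rw [← not_iff_not, notMem_specR_iff, h.exists_iff_isUnit_one_sub_smul, spectrum.mem_iff,
    not_not, Algebra.algebraMap_eq_smul_one, ← Units.val_mk0 hne, ← Units.smul_def,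
    IsUnit.smul_sub_iff_sub_inv_smul, Units.smul_def, Units.val_inv_eq_inv_val, Units.val_mk0,
    inv_inv]

theorem IsResolventAt.re_inner_apply_self (h : IsResolventAt T t R) (y : H) :
    (⟪R y, y⟫ : ℂ).re = (⟪T.toFun (R y), R y⟫ : ℂ).re - t * ‖R y‖ ^ 2 :=
  calc (⟪R y, y⟫ : ℂ).re = (⟪R y, T.toFun (R y) - (t : ℂ) • R y⟫ : ℂ).re := by rw [(h.2 y).2]
    _ = (⟪T.toFun (R y), R y⟫ : ℂ).re - t * ‖R y‖ ^ 2 := by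
      rw [inner_sub_right, inner_smul_right, Complex.sub_re, ← inner_conj_symm, Complex.conj_re,
        Complex.re_ofReal_mul, ← RCLike.re_eq_complex_re, inner_self_eq_norm_sq]

variable [CompleteSpace H]

theorem IsResolventAt.Ioc_inter_specR_eq_empty_iff {a b : ℝ} (hab : a < b)
    (h : IsResolventAt T b R) (hR : IsSelfAdjoint R) :
    Set.Ioc a b ∩ T.specR = ∅ ↔ algebraMap ℝ (H →L[ℂ] H) (-(b - a)⁻¹) ≤ R := by
  rw [algebraMap_le_iff_le_spectrum (a := R), Set.eq_empty_iff_forall_notMem]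
  constructor
  · intro hgap r hr
    by_contra! hlt
    have hab' : 0 < (b - a)⁻¹ := inv_pos.2 (sub_pos.2 hab)
    have hr0 : r < 0 := by linarith
    have hra : -(b - a) < r⁻¹ := by
      rwa [← inv_neg, lt_inv_of_neg hr0 (by linarith)] at hlt
    refine hgap (b + r⁻¹) ⟨⟨by linarith, by linarith [inv_lt_zero.2 hr0]⟩, ?_⟩
    rw [h.mem_specR_iff (by simpa using hr0.ne)]
    simpa using hr
  · rintro hspec t ⟨⟨hat, htb⟩, ht⟩
    have hne : t ≠ b := by
      rintro rfl
      exact notMem_specR_iff.2 ⟨R, h⟩ ht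
    have htb' : 0 < b - t := sub_pos.2 (htb.lt_of_ne hne)
    have hle := hspec _ ((h.mem_specR_iff hne).1 ht)
    rw [← neg_sub b t, inv_neg, neg_le_neg_iff, inv_le_inv₀ htb' (sub_pos.2 hab)] at hle
    linarith

theorem IsResolventAt.nonneg (h : IsResolventAt T t R) (hT : T.IsSelfAdjoint)
    (hbelow : ∀ x ∈ T.dom, t * ‖x‖ ^ 2 ≤ (⟪T.toFun x, x⟫ : ℂ).re) : 0 ≤ R := by
  rw [ContinuousLinearMap.nonneg_iff_isPositive, ContinuousLinearMap.isPositive_def']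
  refine ⟨h.isSelfAdjoint hT, fun y => ?_⟩
  rw [ContinuousLinearMap.reApplyInnerSelf_apply, RCLike.re_eq_complex_re, h.re_inner_apply_self]
  exact sub_nonneg.2 (hbelow _ (h.2 y).1)

theorem IsResolventAt.nonpos (h : IsResolventAt T t R) (hT : T.IsSelfAdjoint)
    (habove : ∀ x ∈ T.dom, (⟪T.toFun x, x⟫ : ℂ).re ≤ t * ‖x‖ ^ 2) : R ≤ 0 := by
  rw [← neg_nonneg, ContinuousLinearMap.nonneg_iff_isPositive, ContinuousLinearMap.isPositive_def']
  refine ⟨(h.isSelfAdjoint hT).neg, fun y => ?_⟩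
  rw [ContinuousLinearMap.reApplyInnerSelf_apply, RCLike.re_eq_complex_re,
    neg_apply, inner_neg_left, Complex.neg_re, h.re_inner_apply_self,
    neg_nonneg]
  exact sub_nonpos.2 (habove _ (h.2 y).1)

theorem IsResolventAt.le_of_nonpos (h : IsResolventAt T s R) (h' : IsResolventAt T t R')
    (hst : s ≤ t) (hR : R ≤ 0) (hR' : R' ≤ 0) : R ≤ R' := by
  rw [← sub_nonneg, h.sub_eq h', ← neg_mul_neg]
  exact smul_nonneg (sub_nonneg.2 hst) <| Commute.mul_nonneg (neg_nonneg.2 hR) (neg_nonneg.2 hR')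
    (h.commute h').neg_left.neg_right

theorem IsResolventAt.norm_sub_le_of_nonpos (h : IsResolventAt T s R) (h' : IsResolventAt T t R')
    (hst : s ≤ t) (hR : R ≤ 0) (hR' : R' ≤ 0) : ‖R' - R‖ ≤ ‖R‖ ^ 2 * (t - s) := by
  have hle : ‖R'‖ ≤ ‖R‖ := by
    rw [← norm_neg R', ← norm_neg R]
    refine CStarAlgebra.norm_le_norm_of_nonneg_of_le (neg_nonneg.2 hR') ?_
    exact neg_le_neg (h.le_of_nonpos h' hst hR hR')
  calc ‖R' - R‖ = (t - s) * ‖R * R'‖ := by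
        rw [h.sub_eq h', norm_smul, Real.norm_of_nonneg (sub_nonneg.2 hst)]
    _ ≤ (t - s) * (‖R‖ * ‖R‖) := by
        exact mul_le_mul_of_nonneg_left ((norm_mul_le _ _).trans (by gcongr)) (sub_nonneg.2 hst)
    _ = ‖R‖ ^ 2 * (t - s) := by ring

end Resolvent

/-- `S` is formally `W⁻¹ * T * W⁻¹`: the bounded operator `T` represents the form of `S` after the
substitution `x = W ξ`. Only the inclusion of `S` in `W⁻¹ * T * W⁻¹` is required: for `W` and `T`
symmetric and `S` self-adjoint it is an equality, since `S` has no proper symmetric extension. -/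
def PMap.IsFactoredBy {H : Type*} [NormedAddCommGroup H] [InnerProductSpace ℂ H]
    (S : PMap H H) (W T : H →L[ℂ] H) : Prop :=
  ∀ x ∈ S.dom, ∃ ξ, W ξ = x ∧ T ξ = W (S.toFun x)

namespace PMap.IsFactoredBy

variable {H : Type*} [NormedAddCommGroup H] [InnerProductSpace ℂ H] [CompleteSpace H]
  {S : PMap H H} {W T : H →L[ℂ] H} {a b t t₀ : ℝ}

theorem isResolventAt (h : S.IsFactoredBy W T) (hS : S.IsSelfAdjoint)
    (hW : _root_.IsSelfAdjoint W) (hT : _root_.IsSelfAdjoint T)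
    (hu : IsUnit (T - t • (W * W))) :
    IsResolventAt S t (W * (T - t • (W * W))⁻¹ʳ * W) := by
  have hKapply (ξ : H) : (T - t • (W * W)) ξ = T ξ - (t : ℂ) • W (W ξ) := by
    rw [← Complex.coe_smul]
    rfl
  set K := T - t • (W * W)
  refine ⟨fun x hx => ?_, fun y => ?_⟩
  · obtain ⟨ξ, rfl, hξ⟩ := h x hx
    have hK : W (S.toFun (W ξ) - (t : ℂ) • W ξ) = K ξ := by
      rw [map_sub, map_smul, ← hξ, hKapply]
    rw [mul_apply_eq_comp, mul_apply_eq_comp, hK, ← mul_apply_eq_comp K⁻¹ʳ,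
      Ring.inverse_mul_cancel _ hu, one_apply_eq_self]
  · set ξ := K⁻¹ʳ (W y) with hξ
    have hTξ : T ξ = W y + (t : ℂ) • W (W ξ) := by
      rw [← sub_eq_iff_eq_add, ← hKapply, hξ, ← mul_apply_eq_comp K, Ring.mul_inverse_cancel _ hu,
        one_apply_eq_self]
    obtain ⟨hmem, hact⟩ := (hS.2 (W ξ) (y + (t : ℂ) • W ξ)).1 fun x hx => by
      obtain ⟨η, rfl, hη⟩ := h x hx
      calc ⟪S.toFun (W η), W ξ⟫ = ⟪W (S.toFun (W η)), ξ⟫ := (hW.isSymmetric _ _).symm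
        _ = ⟪η, T ξ⟫ := by rw [← hη]; exact hT.isSymmetric _ _
        _ = ⟪η, W (y + (t : ℂ) • W ξ)⟫ := by rw [hTξ, map_add, map_smul]
        _ = ⟪W η, y + (t : ℂ) • W ξ⟫ := (hW.isSymmetric _ _).symm
    exact ⟨hmem, sub_eq_iff_eq_add.2 hact.symm⟩

theorem isUnit_of_notMem_specR (h : S.IsFactoredBy W T) (hS : S.IsSelfAdjoint)
    (hW : _root_.IsSelfAdjoint W) (hT : _root_.IsSelfAdjoint T)
    (hu : IsUnit (T - t₀ • (W * W))) (ht : t ∉ S.specR) : IsUnit (T - t • (W * W)) := by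
  set K := T - t₀ • (W * W)
  have hfactor : T - t • (W * W) = K * (1 - ((t - t₀) • K⁻¹ʳ * W) * W) := by
    rw [mul_sub, mul_one, smul_mul_assoc, smul_mul_assoc, mul_smul_comm, mul_assoc,
      Ring.mul_inverse_cancel_left _ _ hu]
    module
  have hres := (h.isResolventAt hS hW hT hu).isUnit_one_sub_smul (notMem_specR_iff.1 ht).choose_spec
  rw [hfactor]
  refine hu.mul ((isUnit_one_sub_mul_comm _ _).1 ?_)
  simpa only [smul_mul_assoc, mul_smul_comm, mul_assoc] using hres

theorem eventually_Ioc_inter_specR_eq_empty (h : S.IsFactoredBy W T) (hS : S.IsSelfAdjoint)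
    (hW : _root_.IsSelfAdjoint W) (hT : _root_.IsSelfAdjoint T)
    (hu : IsUnit (T - b • (W * W))) (hab : a < b) (hgap : Set.Ioc a b ∩ S.specR = ∅) :
    ∀ᶠ T' in 𝓝[≤] T, ∀ S' : PMap H H, S'.IsSelfAdjoint → S'.IsFactoredBy W T' →
      Set.Ioc a b ∩ S'.specR = ∅ := by
  have hKsa : _root_.IsSelfAdjoint (T - b • (W * W)) :=
    hT.sub (.smul (.all b) ((hW.commute_iff hW).1 (.refl W)))
  have hshift : Tendsto (· - b • (W * W)) (𝓝[≤] T) (𝓝[≤] (T - b • (W * W))) :=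
    (Continuous.continuousWithinAt (by fun_prop)).tendsto_nhdsWithin fun T' hle =>
      Set.mem_Iic.2 (sub_le_sub_right hle _)
  filter_upwards [self_mem_nhdsWithin,
    hshift.eventually (eventually_inverse_le_inverse hu hKsa),
    (hshift.mono_right nhdsWithin_le_nhds).eventually (Units.isOpen.mem_nhds hu)]
    with T' hle hinv hu' S' hS' h'
  have hT' : _root_.IsSelfAdjoint T' := by simpa using hT.sub (sub_nonneg.2 hle).isSelfAdjoint
  have hR := h.isResolventAt hS hW hT hu
  have hR' := h'.isResolventAt hS' hW hT' hu'
  rw [hR.Ioc_inter_specR_eq_empty_iff hab (hR.isSelfAdjoint hS)] at hgap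
  rw [hR'.Ioc_inter_specR_eq_empty_iff hab (hR'.isSelfAdjoint hS')]
  exact hgap.trans (hW.conjugate_le_conjugate hinv)

theorem exists_eventually_norm_sub_le (h : S.IsFactoredBy W T) (hS : S.IsSelfAdjoint)
    (hW : _root_.IsSelfAdjoint W) (hT : _root_.IsSelfAdjoint T)
    (hu : IsUnit (T - t • (W * W))) :
    ∃ C, 0 ≤ C ∧ ∀ᶠ T' in 𝓝 T, ∀ S' : PMap H H, S'.IsSelfAdjoint → _root_.IsSelfAdjoint T' →
      S'.IsFactoredBy W T' → ∀ R R', IsResolventAt S t R → IsResolventAt S' t R' →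
        ‖R - R'‖ ≤ C * ‖T - T'‖ := by
  have hshift : Tendsto (· - t • (W * W)) (𝓝 T) (𝓝 (T - t • (W * W))) :=
    Continuous.tendsto (by fun_prop) T
  have hresolvent (T' : H →L[ℂ] H) : ‖W * (T - t • (W * W))⁻¹ʳ * W - W * T'⁻¹ʳ * W‖ ≤
      ‖W‖ * ‖T'⁻¹ʳ - (T - t • (W * W))⁻¹ʳ‖ * ‖W‖ := by
    rw [← sub_mul, ← mul_sub, norm_sub_rev T'⁻¹ʳ]
    exact norm_mul₃_le
  obtain ⟨C, hC0, hC⟩ := (inverse_sub_inverse_isBigO hu).exists_nonneg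
  refine ⟨‖W‖ * C * ‖W‖, by positivity, ?_⟩
  filter_upwards [hshift.eventually hC.bound, hshift.eventually (Units.isOpen.mem_nhds hu)]
    with T' hCT' hu' S' hS' hT' h' R R' hR hR'
  rw [hR.unique (h.isResolventAt hS hW hT hu), hR'.unique (h'.isResolventAt hS' hW hT' hu')]
  calc _ ≤ ‖W‖ * ‖(T' - t • (W * W))⁻¹ʳ - (T - t • (W * W))⁻¹ʳ‖ * ‖W‖ := hresolvent _
    _ ≤ ‖W‖ * (C * ‖T - T'‖) * ‖W‖ := by
      rw [sub_sub_sub_cancel_right, norm_sub_rev T'] at hCT'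
      gcongr
    _ = ‖W‖ * C * ‖W‖ * ‖T - T'‖ := by ring

theorem exists_eventually_gap_and_norm_sub_le {S : ℝ → PMap H H} {T : ℝ → H →L[ℂ] H} {l K : ℝ}
    (h : ∀ s, l ≤ s → (S s).IsFactoredBy W (T s)) (hS : ∀ s, l ≤ s → (S s).IsSelfAdjoint)
    (hW : _root_.IsSelfAdjoint W) (hT : _root_.IsSelfAdjoint (T l))
    (hu : IsUnit (T l - t₀ • (W * W))) (hTle : ∀ s, l ≤ s → T s ≤ T l)
    (hTnorm : ∀ s, l ≤ s → ‖T l - T s‖ ≤ K * (s - l)) (hab : a < b)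
    (hgap : Set.Ioc a b ∩ (S l).specR = ∅) :
    ∃ C, ∀ᶠ s in 𝓝[≥] l, Set.Ioc a b ∩ (S s).specR = ∅ ∧
      ∀ R R', IsResolventAt (S l) b R → IsResolventAt (S s) b R' → ‖R - R'‖ ≤ C * (s - l) := by
  have hTlim : Tendsto T (𝓝[≥] l) (𝓝[≤] (T l)) := by
    refine tendsto_nhdsWithin_iff.2 ⟨?_, eventually_nhdsWithin_of_forall hTle⟩
    refine tendsto_iff_norm_sub_tendsto_zero.2 (squeeze_zero' (.of_forall fun _ => norm_nonneg _)
      (eventually_nhdsWithin_of_forall fun s hs => norm_sub_rev (T s) _ ▸ hTnorm s hs) ?_)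
    exact (Continuous.tendsto' (by fun_prop) l 0 (by simp)).mono_left nhdsWithin_le_nhds
  have hub : IsUnit (T l - b • (W * W)) :=
    (h l le_rfl).isUnit_of_notMem_specR (hS l le_rfl) hW hT hu
      fun hb => Set.eq_empty_iff_forall_notMem.1 hgap b ⟨⟨hab, le_rfl⟩, hb⟩
  have hgap' := (h l le_rfl).eventually_Ioc_inter_specR_eq_empty (hS l le_rfl) hW hT hub hab hgap
  obtain ⟨C, hC0, hC⟩ := (h l le_rfl).exists_eventually_norm_sub_le (hS l le_rfl) hW hT hub
  refine ⟨C * K, ?_⟩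
  filter_upwards [self_mem_nhdsWithin, hTlim.eventually hgap',
    (hTlim.mono_right nhdsWithin_le_nhds).eventually hC] with s hs hgap_s hnorm_s
  have hTs : _root_.IsSelfAdjoint (T s) := by
    simpa using hT.sub (sub_nonneg.2 (hTle s hs)).isSelfAdjoint
  refine ⟨hgap_s _ (hS s hs) (h s hs), fun R R' hR hR' => ?_⟩
  calc ‖R - R'‖ ≤ C * ‖T l - T s‖ := hnorm_s _ (hS s hs) hTs (h s hs) R R' hR hR'
    _ ≤ C * (K * (s - l)) := mul_le_mul_of_nonneg_left (hTnorm s hs) hC0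
    _ = C * K * (s - l) := by ring

end PMap.IsFactoredBy

/-- `Bs` is the Hilbert space adjoint `B*` of `B`. -/
def PMap.IsAdjointOf {H₁ H₂ : Type*} [NormedAddCommGroup H₁] [InnerProductSpace ℂ H₁]
    [NormedAddCommGroup H₂] [InnerProductSpace ℂ H₂] (Bs : PMap H₁ H₂) (B : PMap H₂ H₁) : Prop :=
  (∀ y, y ∈ Bs.dom ↔ ∃ z, ∀ x ∈ B.dom, ⟪B.toFun x, y⟫ = ⟪x, z⟫) ∧
    ∀ x ∈ B.dom, ∀ y ∈ Bs.dom, ⟪B.toFun x, y⟫ = ⟪x, Bs.toFun y⟫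

section SchurComplement

open scoped InnerProduct

variable {H₁ : Type*} [NormedAddCommGroup H₁] [InnerProductSpace ℂ H₁]
  {H₂ : Type*} [NormedAddCommGroup H₂] [InnerProductSpace ℂ H₂]
  {A : PMap H₁ H₁} {B : PMap H₂ H₁} {Bs : PMap H₁ H₂} {S : PMap H₁ H₁} {ν α β : ℝ}
  {RA W : H₁ →L[ℂ] H₁} {G : H₂ →L[ℂ] H₁} {V : H₁ →L[ℂ] H₂} {R R' : H₂ →L[ℂ] H₂} {c c' : ℝ}

theorem PMap.IsAdjointOf.toFun_eq (hBs : Bs.IsAdjointOf B) (hB : Dense (B.dom : Set H₂))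
    {y : H₁} {z : H₂} (h : ∀ x ∈ B.dom, ⟪B.toFun x, y⟫ = ⟪x, z⟫) : Bs.toFun y = z := by
  have hy : y ∈ Bs.dom := (hBs.1 y).2 ⟨z, h⟩
  refine hB.eq_of_inner_right ℂ fun x hx => ?_
  rw [← hBs.2 x hx y hy, h x hx]

theorem denseRange_of_mul_self_eq_resolvent (hA : A.IsSelfAdjoint) (hRA : IsResolventAt A ν RA)
    (hWW : W * W = RA) : DenseRange W := by
  refine hA.1.mono fun x hx => ⟨W (A.toFun x - (ν : ℂ) • x), ?_⟩
  rw [← mul_apply_eq_comp, hWW, hRA.1 x hx]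

theorem inner_apply_eq_inner_extension (hA : A.IsSelfAdjoint) (hRA : IsResolventAt A ν RA)
    (hBs : Bs.IsAdjointOf B) (hABs : A.dom ≤ Bs.dom)
    (hWW : W * W = RA) (hV : ∀ h, V (W h) = Bs.toFun (RA h)) {x : H₂} (hx : x ∈ B.dom) (ξ : H₁) :
    ⟪B.toFun x, W ξ⟫ = ⟪x, V ξ⟫ := by
  refine congrFun ((denseRange_of_mul_self_eq_resolvent hA hRA hWW).equalizer
    (g := fun ξ => ⟪B.toFun x, W ξ⟫) (h := fun ξ => ⟪x, V ξ⟫) (by fun_prop) (by fun_prop)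
    (funext fun h => ?_)) ξ
  rw [Function.comp_apply, Function.comp_apply, hV, ← hBs.2 x hx _ (hABs (hRA.2 h).1), ← hWW,
    mul_apply_eq_comp]

variable [CompleteSpace H₁]

theorem norm_apply_resolvent_le (hRA : IsResolventAt A ν RA) (hW : IsSelfAdjoint W)
    (hWW : W * W = RA)
    (hαβ : ∀ x ∈ A.dom, ‖Bs.toFun x‖ ^ 2 ≤ α * (⟪A.toFun x, x⟫ : ℂ).re + β * ‖x‖ ^ 2) (h : H₁) :
    ‖Bs.toFun (RA h)‖ ≤ √(|α| + |α * ν + β| * ‖W‖ ^ 2) * ‖W h‖ := by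
  have hRAW : RA h = W (W h) := by rw [← hWW, mul_apply_eq_comp]
  have hform : (⟪RA h, h⟫ : ℂ).re = ‖W h‖ ^ 2 := by
    rw [hRAW, ← inner_self_eq_norm_sq (𝕜 := ℂ)]
    exact congrArg Complex.re (hW.isSymmetric (W h) h)
  refine abs_le_of_sq_le_sq' ?_ (by positivity) |>.2
  calc ‖Bs.toFun (RA h)‖ ^ 2
      ≤ α * (⟪A.toFun (RA h), RA h⟫ : ℂ).re + β * ‖RA h‖ ^ 2 := hαβ _ (hRA.2 h).1
    _ = α * ‖W h‖ ^ 2 + (α * ν + β) * ‖W (W h)‖ ^ 2 := by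
      rw [sub_eq_iff_eq_add.1 (hRA.re_inner_apply_self h).symm, hform, hRAW]
      ring
    _ ≤ |α| * ‖W h‖ ^ 2 + |α * ν + β| * (‖W‖ * ‖W h‖) ^ 2 := by
      gcongr
      exacts [le_abs_self _, le_abs_self _, W.le_opNorm _]
    _ = (√(|α| + |α * ν + β| * ‖W‖ ^ 2) * ‖W h‖) ^ 2 := by
      rw [mul_pow (√_), Real.sq_sqrt (by positivity)]
      ring

variable [CompleteSpace H₂]

theorem exists_extension_comp_resolvent (hA : A.IsSelfAdjoint) (hRA : IsResolventAt A ν RA)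
    (hABs : A.dom ≤ Bs.dom)
    (hW : IsSelfAdjoint W) (hWW : W * W = RA)
    (hαβ : ∀ x ∈ A.dom, ‖Bs.toFun x‖ ^ 2 ≤ α * (⟪A.toFun x, x⟫ : ℂ).re + β * ‖x‖ ^ 2) :
    ∃ V : H₁ →L[ℂ] H₂, ∀ h, V (W h) = Bs.toFun (RA h) := by
  have hmem (h : H₁) : RA h ∈ Bs.dom := hABs (hRA.2 h).1
  let BsRA : H₁ →ₗ[ℂ] H₂ :=
    { toFun := fun h => Bs.toFun (RA h)
      map_add' := fun x y => by rw [map_add, Bs.map_add' _ (hmem x) _ (hmem y)]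
      map_smul' := fun z x => by rw [map_smul, Bs.map_smul' z _ (hmem x)]; rfl }
  exact ⟨BsRA.extendOfNorm (W : H₁ →ₗ[ℂ] H₁), fun h => BsRA.extendOfNorm_eq
    (denseRange_of_mul_self_eq_resolvent hA hRA hWW)
    ⟨_, norm_apply_resolvent_le hRA hW hWW hαβ⟩ h⟩

theorem exists_form_factorization (hA : A.IsSelfAdjoint) (hRA : IsResolventAt A ν RA)
    (hAbelow : ∀ x ∈ A.dom, ν * ‖x‖ ^ 2 ≤ (⟪A.toFun x, x⟫ : ℂ).re)
    (hB : Dense (B.dom : Set H₂)) (hBs : Bs.IsAdjointOf B) (hABs : A.dom ≤ Bs.dom)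
    (hαβ : ∀ x ∈ A.dom, ‖Bs.toFun x‖ ^ 2 ≤ α * (⟪A.toFun x, x⟫ : ℂ).re + β * ‖x‖ ^ 2)
    (hG : ∀ y ∈ B.dom, G y = RA (B.toFun y)) :
    ∃ (W : H₁ →L[ℂ] H₁) (V : H₁ →L[ℂ] H₂), IsSelfAdjoint W ∧ W * W = RA ∧
      (∀ ξ, Bs.toFun (W ξ) = V ξ) ∧ G = W ∘L V† := by
  have hRA_nonneg : 0 ≤ RA := hRA.nonneg hA hAbelow
  have hW : IsSelfAdjoint (CFC.sqrt RA) := (CFC.sqrt_nonneg RA).isSelfAdjoint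
  have hWW : CFC.sqrt RA * CFC.sqrt RA = RA := CFC.sqrt_mul_sqrt_self RA hRA_nonneg
  obtain ⟨V, hV⟩ := exists_extension_comp_resolvent hA hRA hABs hW hWW hαβ
  have hinner (x : H₂) (hx : x ∈ B.dom) (ξ : H₁) : ⟪B.toFun x, CFC.sqrt RA ξ⟫ = ⟪x, V ξ⟫ :=
    inner_apply_eq_inner_extension hA hRA hBs hABs hWW hV hx ξ
  refine ⟨CFC.sqrt RA, V, hW, hWW, fun ξ => hBs.toFun_eq hB fun x hx => hinner x hx ξ, ?_⟩
  refine DFunLike.coe_injective <| G.continuous.ext_on hB (by fun_prop) fun x hx =>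
    ext_inner_right ℂ fun y => ?_
  calc ⟪G x, y⟫ = ⟪CFC.sqrt RA (CFC.sqrt RA (B.toFun x)), y⟫ := by
        rw [hG x hx, ← mul_apply_eq_comp, hWW]
    _ = ⟪x, V (CFC.sqrt RA y)⟫ := by
      rw [← hinner x hx]
      exact (hW.isSymmetric _ _).trans (hW.isSymmetric _ _)
    _ = ⟪CFC.sqrt RA ((V†) x), y⟫ := by
      rw [← ContinuousLinearMap.adjoint_inner_left]
      exact (hW.isSymmetric _ _).symm

/-- The bounded operator on `H₁` representing the Schur form after the substitution `x = W ξ`, where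
`W = (A - ν)^(-1/2)`, `V = B* W`, `R = (D - μ)⁻¹` and `c = ν - μ`. -/
noncomputable def schurFormOperator (W : H₁ →L[ℂ] H₁) (V : H₁ →L[ℂ] H₂) (R : H₂ →L[ℂ] H₂)
    (c : ℝ) : H₁ →L[ℂ] H₁ :=
  1 - V† ∘L R ∘L V + c • (W * W)

theorem isFactoredBy_schurFormOperator (hRA : IsResolventAt A ν RA) (hWW : W * W = RA)
    (hV : ∀ ξ, Bs.toFun (W ξ) = V ξ) (hG : G = W ∘L V†)
    (hS : ∀ x ∈ S.dom, x - G (R (Bs.toFun x)) ∈ A.dom ∧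
      S.toFun x = A.toFun (x - G (R (Bs.toFun x))) - (ν : ℂ) • (x - G (R (Bs.toFun x)))
        + (c : ℂ) • x) :
    S.IsFactoredBy W (schurFormOperator W V R c) := by
  intro x hx
  obtain ⟨hmem, hSx⟩ := hS x hx
  set y := A.toFun (x - G (R (Bs.toFun x))) - (ν : ℂ) • (x - G (R (Bs.toFun x)))
  set ξ := W y + (V†) (R (Bs.toFun x)) with hξ
  have hWξ : W ξ = x := by
    have hWWy : W (W y) = x - G (R (Bs.toFun x)) := by
      rw [← mul_apply_eq_comp, hWW, hRA.1 _ hmem]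
    rw [hξ, map_add, hWWy, hG, ContinuousLinearMap.comp_apply, sub_add_cancel]
  refine ⟨ξ, hWξ, ?_⟩
  calc schurFormOperator W V R c ξ
      = ξ - (V†) (R (V ξ)) + (c : ℂ) • W (W ξ) := by
        rw [Complex.coe_smul]
        rfl
    _ = W y + (c : ℂ) • W x := by rw [← hV, hWξ, hξ, add_sub_cancel_right]
    _ = W (S.toFun x) := by rw [hSx, map_add, map_smul]

theorem isSelfAdjoint_schurFormOperator (hW : IsSelfAdjoint W)
    (hR : IsSelfAdjoint R) :
    IsSelfAdjoint (schurFormOperator W V R c) :=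
  ((IsSelfAdjoint.one _).sub (hR.adjoint_conj V)).add
    (.smul (.all c) ((hW.commute_iff hW).1 (.refl W)))

theorem schurFormOperator_sub :
    schurFormOperator W V R c - schurFormOperator W V R' c' =
      V† ∘L (R' - R) ∘L V + (c - c') • (W * W) := by
  simp only [schurFormOperator, ContinuousLinearMap.sub_comp, ContinuousLinearMap.comp_sub]
  module

theorem schurFormOperator_le (hW : IsSelfAdjoint W) (hR : R' ≤ R) (hc : c ≤ c') :
    schurFormOperator W V R c ≤ schurFormOperator W V R' c' := by
  rw [← sub_nonneg, schurFormOperator_sub]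
  refine add_nonneg ?_ (smul_nonneg (sub_nonneg.2 hc) hW.mul_self_nonneg)
  rw [← sub_nonneg, ContinuousLinearMap.nonneg_iff_isPositive] at hR
  exact (ContinuousLinearMap.nonneg_iff_isPositive _).2 (hR.adjoint_conj V)

theorem norm_schurFormOperator_sub_le :
    ‖schurFormOperator W V R c - schurFormOperator W V R' c'‖ ≤
      ‖V‖ ^ 2 * ‖R' - R‖ + ‖W‖ ^ 2 * |c - c'| := by
  rw [schurFormOperator_sub]
  calc ‖V† ∘L (R' - R) ∘L V + (c - c') • (W * W)‖
      ≤ ‖V†‖ * (‖R' - R‖ * ‖V‖) + |c - c'| * (‖W‖ * ‖W‖) := by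
        refine norm_add_le_of_le ((V†.opNorm_comp_le _).trans ?_) ((norm_smul_le _ _).trans ?_)
        · gcongr
          exact ContinuousLinearMap.opNorm_comp_le _ _
        · rw [Real.norm_eq_abs]
          gcongr
          exact norm_mul_le _ _
    _ = ‖V‖ ^ 2 * ‖R' - R‖ + ‖W‖ ^ 2 * |c - c'| := by
      rw [LinearIsometryEquiv.norm_map]
      ring

theorem isUnit_schurFormOperator_sub (hR : R ≤ 0) :
    IsUnit (schurFormOperator W V R c - c • (W * W)) := by
  refine CStarAlgebra.isUnit_of_le 1 ?_ isStrictlyPositive_one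
  have hconj : 0 ≤ V† ∘L (-R) ∘L V := by
    rw [← neg_nonneg, ContinuousLinearMap.nonneg_iff_isPositive] at hR
    exact (ContinuousLinearMap.nonneg_iff_isPositive _).2 (hR.adjoint_conj V)
  rw [← sub_nonneg]
  convert hconj using 1
  simp only [schurFormOperator, ContinuousLinearMap.neg_comp, ContinuousLinearMap.comp_neg]
  abel

end SchurComplement

theorem statement12_general
    {H₁ : Type*} [NormedAddCommGroup H₁] [InnerProductSpace ℂ H₁] [CompleteSpace H₁]
    {H₂ : Type*} [NormedAddCommGroup H₂] [InnerProductSpace ℂ H₂] [CompleteSpace H₂]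
    {A : PMap H₁ H₁} (hA : A.IsSelfAdjoint) {D : PMap H₂ H₂} (hD : D.IsSelfAdjoint)
    {d : ℝ} (hDabove : ∀ y ∈ D.dom, (⟪D.toFun y, y⟫ : ℂ).re ≤ d * ‖y‖ ^ 2)
    {B : PMap H₂ H₁} (hB : Dense (B.dom : Set H₂)) {Bs : PMap H₁ H₂} (hBs : Bs.IsAdjointOf B)
    (hABs : A.dom ≤ Bs.dom) {α β : ℝ}
    (hαβ : ∀ x ∈ A.dom, ‖Bs.toFun x‖ ^ 2 ≤ α * (⟪A.toFun x, x⟫ : ℂ).re + β * ‖x‖ ^ 2)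
    {ν : ℝ} (hν : ∀ x ∈ A.dom, ν * ‖x‖ ^ 2 ≤ (⟪A.toFun x, x⟫ : ℂ).re)
    {RA : H₁ →L[ℂ] H₁} (hRA : IsResolventAt A ν RA)
    {G : H₂ →L[ℂ] H₁} (hG : ∀ y ∈ B.dom, G y = RA (B.toFun y))
    {RD : ℝ → H₂ →L[ℂ] H₂} (hRD : ∀ s, d < s → IsResolventAt D s (RD s))
    {S : ℝ → PMap H₁ H₁} (hS : ∀ s, d < s → (S s).IsSelfAdjoint)
    (hSschur : ∀ s, d < s → ∀ x ∈ (S s).dom, x - G (RD s (Bs.toFun x)) ∈ A.dom ∧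
      (S s).toFun x = A.toFun (x - G (RD s (Bs.toFun x))) - (ν : ℂ) • (x - G (RD s (Bs.toFun x)))
        + ((ν : ℂ) - (s : ℂ)) • x)
    {l : ℝ} (hl : d < l) {a b : ℝ} (hab : a < b) (hgap : Set.Ioc a b ∩ (S l).specR = ∅) :
    ∃ C, ∀ᶠ s in 𝓝[≥] l, Set.Ioc a b ∩ (S s).specR = ∅ ∧
      ∀ R R' : H₁ →L[ℂ] H₁, IsResolventAt (S l) b R → IsResolventAt (S s) b R' →
        ‖R - R'‖ ≤ C * (s - l) := by
  obtain ⟨W, V, hW, hWW, hV, hGW⟩ := exists_form_factorization hA hRA hν hB hBs hABs hαβ hG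
  have hd (s : ℝ) (hs : l ≤ s) : d < s := hl.trans_le hs
  have hRD_nonpos (s : ℝ) (hs : l ≤ s) : RD s ≤ 0 :=
    (hRD s (hd s hs)).nonpos hD fun y hy =>
      (hDabove y hy).trans (mul_le_mul_of_nonneg_right (hd s hs).le (sq_nonneg _))
  refine PMap.IsFactoredBy.exists_eventually_gap_and_norm_sub_le
    (T := fun s => schurFormOperator W V (RD s) (ν - s)) (t₀ := ν - l)
    (K := ‖V‖ ^ 2 * ‖RD l‖ ^ 2 + ‖W‖ ^ 2) (fun s hs => ?factored) (fun s hs => hS s (hd s hs)) hW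
    (isSelfAdjoint_schurFormOperator hW ((hRD l hl).isSelfAdjoint hD))
    (isUnit_schurFormOperator_sub (hRD_nonpos l le_rfl)) (fun s hs => ?le) (fun s hs => ?norm)
    hab hgap
  case factored =>
    exact isFactoredBy_schurFormOperator hRA hWW hV hGW (by exact_mod_cast hSschur s (hd s hs))
  case le =>
    exact schurFormOperator_le hW ((hRD l hl).le_of_nonpos (hRD s (hd s hs)) hs
      (hRD_nonpos l le_rfl) (hRD_nonpos s hs)) (sub_le_sub_left hs ν)
  case norm =>
    calc _ ≤ ‖V‖ ^ 2 * ‖RD s - RD l‖ + ‖W‖ ^ 2 * |(ν - l) - (ν - s)| :=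
          norm_schurFormOperator_sub_le
      _ ≤ ‖V‖ ^ 2 * (‖RD l‖ ^ 2 * (s - l)) + ‖W‖ ^ 2 * (s - l) := by
        rw [sub_sub_sub_cancel_left, abs_of_nonneg (sub_nonneg.2 hs)]
        gcongr
        exact (hRD l hl).norm_sub_le_of_nonpos (hRD s (hd s hs)) hs (hRD_nonpos l le_rfl)
          (hRD_nonpos s hs)
      _ = (‖V‖ ^ 2 * ‖RD l‖ ^ 2 + ‖W‖ ^ 2) * (s - l) := by ring

/-- Lemma 4.6 of the paper.  Let `lam_m ∈ (d, λ_e)` be an eigenvalue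
of `M`, let `b > 0` be such that `(0, b] ∩ Spec (S (lam_m)) = ∅`, and let `μ n ≥ lam_m`
with `ε n = μ n − lam_m → 0`.  Then for all sufficiently large `n`:
`(0, b] ∩ Spec (S (μ n)) = ∅`, and `‖(S(lam_m) − b)⁻¹ − (S(μ n) − b)⁻¹‖ = O(ε n)`. -/
theorem statement12
    {H1 : Type*} [NormedAddCommGroup H1] [InnerProductSpace ℂ H1] [CompleteSpace H1]
    {H2 : Type*} [NormedAddCommGroup H2] [InnerProductSpace ℂ H2] [CompleteSpace H2]
    -- (i) `A` and `D` are self-adjoint on `H1` and `H2` respectively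
    (A : PMap H1 H1) (hA : A.IsSelfAdjoint)
    (D : PMap H2 H2) (hD : D.IsSelfAdjoint)
    -- (ii) `A` bounded below, `D` bounded above with `d = max Spec D`,
    -- `B` closed and densely defined from `H2` to `H1`
    (hAbelow : ∃ c : ℝ, ∀ x ∈ A.dom, c * ‖x‖ ^ 2 ≤ (⟪A.toFun x, x⟫ : ℂ).re)
    (d : ℝ) (hd : IsGreatest D.specR d)
    (hDabove : ∀ y ∈ D.dom, (⟪D.toFun y, y⟫ : ℂ).re ≤ d * ‖y‖ ^ 2)
    (B : PMap H2 H1)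
    (hBclosed : IsClosed {p : H2 × H1 | p.1 ∈ B.dom ∧ p.2 = B.toFun p.1})
    (hBdense : Dense (B.dom : Set H2))
    -- `Bs` is the adjoint `B*` of `B`
    (Bs : PMap H1 H2)
    (hBs : (∀ y : H1, y ∈ Bs.dom ↔ ∃ z : H2, ∀ x ∈ B.dom, ⟪B.toFun x, y⟫ = ⟪x, z⟫) ∧
      ∀ x ∈ B.dom, ∀ y ∈ Bs.dom, ⟪B.toFun x, y⟫ = ⟪x, Bs.toFun y⟫)
    -- `Fa = Dom(|A|^{1/2}) = Dom(𝔞)`, the domain of the closed form `fa = 𝔞` of `A`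
    (Fa : Submodule ℂ H1) (fa : H1 → H1 → ℂ)
    (hAdomFa : (A.dom : Set H1) ⊆ Fa)
    (hfaHerm : ∀ x ∈ Fa, ∀ y ∈ Fa, fa x y = starRingEnd ℂ (fa y x))
    (hfaA : ∀ x ∈ A.dom, ∀ y ∈ Fa, fa x y = ⟪A.toFun x, y⟫)
    -- (iii) `Dom(|A|^{1/2}) ⊆ Dom(B*)`, `Dom(B) ⊆ Dom(D)`, and `Dom(B)` is a core for `D`
    (hFaBs : (Fa : Set H1) ⊆ (Bs.dom : Set H1))
    (hBD : B.dom ≤ D.dom)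
    (hBcore : ∀ y ∈ D.dom, ∀ δ : ℝ, 0 < δ →
      ∃ z ∈ B.dom, ‖z - y‖ < δ ∧ ‖D.toFun z - D.toFun y‖ < δ)
    -- `ν < min Spec A`, with `RA = (A − ν)⁻¹` and `G = cl((A − ν)⁻¹ B)` bounded,
    -- and `RD z = (D − z)⁻¹` for `Re z > d`
    (ν : ℝ) (hν : ∃ c : ℝ, ν < c ∧ ∀ x ∈ A.dom, c * ‖x‖ ^ 2 ≤ (⟪A.toFun x, x⟫ : ℂ).re)
    (RA : H1 →L[ℂ] H1)
    (hRA : (∀ x ∈ A.dom, RA (A.toFun x - (ν : ℂ) • x) = x) ∧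
      ∀ y : H1, RA y ∈ A.dom ∧ A.toFun (RA y) - (ν : ℂ) • RA y = y)
    (G : H2 →L[ℂ] H1) (hG : ∀ y ∈ B.dom, G y = RA (B.toFun y))
    (RD : ℂ → (H2 →L[ℂ] H2))
    (hRD : ∀ z : ℂ, d < z.re →
      (∀ y ∈ D.dom, RD z (D.toFun y - z • y) = y) ∧
      ∀ w : H2, RD z w ∈ D.dom ∧ D.toFun (RD z w) - z • RD z w = w)
    -- `M` is the self-adjoint closure of `M₀`
    (M : PMap (WithLp 2 (H1 × H2)) (WithLp 2 (H1 × H2))) (hM : M.IsSelfAdjoint)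
    (hMdom : ∀ (x : H1) (y : H2),
      (WithLp.equiv 2 (H1 × H2)).symm (x, y) ∈ M.dom ↔ y ∈ D.dom ∧ x + G y ∈ A.dom)
    (hMact : ∀ (x : H1) (y : H2),
      (WithLp.equiv 2 (H1 × H2)).symm (x, y) ∈ M.dom → x ∈ Bs.dom →
      M.toFun ((WithLp.equiv 2 (H1 × H2)).symm (x, y)) =
        (WithLp.equiv 2 (H1 × H2)).symm
          (A.toFun (x + G y) - (ν : ℂ) • G y, Bs.toFun x + D.toFun y))
    -- the Schur complement `S μ` for real `μ > d`
    (S : ℝ → PMap H1 H1)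
    (hSsa : ∀ μ : ℝ, d < μ → (S μ).IsSelfAdjoint)
    (hSdom : ∀ μ : ℝ, d < μ → ∀ x : H1,
      x ∈ (S μ).dom ↔ x ∈ Fa ∧ x - G (RD (μ : ℂ) (Bs.toFun x)) ∈ A.dom)
    (hSact : ∀ μ : ℝ, d < μ → ∀ x ∈ (S μ).dom,
      (S μ).toFun x = A.toFun (x - G (RD (μ : ℂ) (Bs.toFun x)))
        - (ν : ℂ) • (x - G (RD (μ : ℂ) (Bs.toFun x))) + ((ν : ℂ) - (μ : ℂ)) • x)
    -- `lamE`: the interval `(d, lamE)` lies below the essential spectrum of `M`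
    -- (`lamE = inf (Spec_ess M ∩ (d, ∞))`)
    (lamE : ℝ) (hlamE : ∀ t ∈ M.specEssR, d < t → lamE ≤ t)
    -- the constants `α, β ≥ 0` with `‖B* u‖² ≤ α 𝔞[u] + β ‖u‖²` on `Dom 𝔞`
    (αc βc : ℝ) (hαc : 0 ≤ αc) (hβc : 0 ≤ βc)
    (hαβ : ∀ x ∈ Fa, ‖Bs.toFun x‖ ^ 2 ≤ αc * (fa x x).re + βc * ‖x‖ ^ 2)
    -- `lam_m` is an eigenvalue of `M` in `(d, λ_e)`
    (lam_m : ℝ) (hlam_m : lam_m ∈ Set.Ioo d lamE) (hlamEig : M.eigSp lam_m ≠ ⊥)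
    (b : ℝ) (hb : 0 < b)
    (hbspec : Set.Ioc 0 b ∩ (S lam_m).specR = ∅)
    (μ : ℕ → ℝ) (hμge : ∀ n, lam_m ≤ μ n)
    (ε : ℕ → ℝ) (hεdef : ∀ n, ε n = μ n - lam_m)
    (hε0 : Tendsto ε atTop (𝓝 0)) :
    ∃ (N : ℕ) (C : ℝ), ∀ n ≥ N,
      Set.Ioc 0 b ∩ (S (μ n)).specR = ∅ ∧
      ∀ R1 R2 : H1 →L[ℂ] H1, IsResolventAt (S lam_m) b R1 → IsResolventAt (S (μ n)) b R2 →
        ‖R1 - R2‖ ≤ C * ε n := by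
  have hαβA (x : H1) (hx : x ∈ A.dom) :
      ‖Bs.toFun x‖ ^ 2 ≤ αc * (⟪A.toFun x, x⟫ : ℂ).re + βc * ‖x‖ ^ 2 :=
    hfaA x hx x (hAdomFa hx) ▸ hαβ x (hAdomFa hx)
  obtain ⟨c, hνc, hc⟩ := hν
  obtain ⟨C, hC⟩ := statement12_general hA hD hDabove hBdense hBs (hAdomFa.trans hFaBs) hαβA
    (fun x hx => (by gcongr : ν * ‖x‖ ^ 2 ≤ c * ‖x‖ ^ 2).trans (hc x hx)) hRA hG
    (RD := fun s => RD s) (fun s hs => hRD s hs) hSsa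
    (fun s hs x hx => ⟨((hSdom s hs x).1 hx).2, hSact s hs x hx⟩) hlam_m.1 hb hbspec
  have hμ : Tendsto μ atTop (𝓝[≥] lam_m) :=
    tendsto_nhdsWithin_iff.2 ⟨tendsto_sub_nhds_zero_iff.1 (by simpa only [← hεdef] using hε0),
      .of_forall hμge⟩
  obtain ⟨N, hN⟩ := eventually_atTop.1 (hμ.eventually hC)
  exact ⟨N, C, fun n hn => hεdef n ▸ hN n hn⟩
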